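/- arXiv:math/0112074 — 7 statements merged into one kernel-verified Lean document; each statement's English description precedes it below -/
import Mathlib

section
/- Let B ⊂ A be an inclusion of C*-algebras and let M be a finitely generated Hilbert B-bimodule in A with finite set of generators {ψ_l}. Then P_M := Σ_l ψ_l ψ_l* is a projection in A, P_M does not depend on the choice of the generators, and P_M ψ = ψ for every ψ ∈ M. -/
/-!
STATEMENT 0: Let `B ⊂ A` be an inclusion of C*-algebras and let `M` be a finitely
generated Hilbert `B`-bimodule in `A` with finite set of generators `{ψ_l}`.
Then `P_M := Σ_l ψ_l ψ_l*` is a projection in `A`, `P_M` does not depend on the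
choice of the generators, and `P_M ψ = ψ` for every `ψ ∈ M`.
-/

open scoped BigOperators

/-- A Hilbert `B`-bimodule in a C*-algebra `A` (where `B` is a C*-subalgebra of `A`,
i.e. a norm-closed star subalgebra): a norm-closed subspace `M ⊆ A` such that
`B·M ⊆ M`, `M·B ⊆ M` and `M*·M ⊆ B`. -/
structure HilbertBimoduleIn (A : Type*) [NonUnitalCStarAlgebra A]
    (B : NonUnitalStarSubalgebra ℂ A) : Type _ where
  carrier : Submodule ℂ A
  isClosed : IsClosed (carrier : Set A)
  left_mul_mem : ∀ b ∈ B, ∀ m ∈ carrier, b * m ∈ carrier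
  right_mul_mem : ∀ m ∈ carrier, ∀ b ∈ B, m * b ∈ carrier
  inner_mem : ∀ m ∈ carrier, ∀ m' ∈ carrier, star m * m' ∈ B

/-- A finite family `ψ : ι → A` is a generating family for the Hilbert bimodule `M` in `A`
if every `ψ_i` lies in `M` and every `m ∈ M` satisfies `m = Σ_i ψ_i ψ_i* m`
(so that `m` is a right linear combination, with coefficients in `B`, of the `ψ_i`). -/
def HilbertBimoduleIn.IsGeneratingFamily {A : Type*} [NonUnitalCStarAlgebra A]
    {B : NonUnitalStarSubalgebra ℂ A} (M : HilbertBimoduleIn A B)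
    {ι : Type*} [Fintype ι] (ψ : ι → A) : Prop :=
  (∀ i, ψ i ∈ M.carrier) ∧ ∀ m ∈ M.carrier, m = ∑ i, ψ i * star (ψ i) * m

/-- The support `P_M = Σ_l ψ_l ψ_l*` of a finitely generated Hilbert bimodule is a
projection (a self-adjoint idempotent), it is independent of the choice of the finite
generating family, and `P_M ψ = ψ` for every `ψ ∈ M`. -/
theorem support_of_fin_gen_hilbert_bimodule_in
    {A : Type*} [NonUnitalCStarAlgebra A] (B : NonUnitalStarSubalgebra ℂ A)
    (hB : IsClosed (B : Set A)) (M : HilbertBimoduleIn A B)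
    {ι κ : Type*} [Fintype ι] [Fintype κ] (ψ : ι → A) (φ : κ → A)
    (hψ : M.IsGeneratingFamily ψ) (hφ : M.IsGeneratingFamily φ) :
    IsSelfAdjoint (∑ i, ψ i * star (ψ i)) ∧
      IsIdempotentElem (∑ i, ψ i * star (ψ i)) ∧
      (∑ i, ψ i * star (ψ i)) = (∑ j, φ j * star (φ j)) ∧
      ∀ m ∈ M.carrier, (∑ i, ψ i * star (ψ i)) * m = m := by
  have left : ∀ {α : Type _} [Fintype α] (χ : α → A), M.IsGeneratingFamily χ →
      ∀ m ∈ M.carrier, (∑ i, χ i * star (χ i)) * m = m := by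
    intro α _ χ h m hm
    rw [Finset.sum_mul]
    exact (h.2 m hm).symm
  have left' : ∀ m ∈ M.carrier, (∑ j, φ j * star (φ j)) * m = m := by
    intro m hm
    rw [Finset.sum_mul]
    exact (hφ.2 m hm).symm
  have saP : IsSelfAdjoint (∑ i, ψ i * star (ψ i)) := by
    simp [IsSelfAdjoint, star_sum]
  have saQ : IsSelfAdjoint (∑ j, φ j * star (φ j)) := by
    simp [IsSelfAdjoint, star_sum]
  have leftP := left ψ hψ
  have hPP : (∑ i, ψ i * star (ψ i)) * (∑ i, ψ i * star (ψ i)) = ∑ i, ψ i * star (ψ i) := by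
    conv_lhs => rw [Finset.mul_sum]
    exact Finset.sum_congr rfl fun i _ => by rw [← mul_assoc, leftP _ (hψ.1 i)]
  have hPQ : (∑ i, ψ i * star (ψ i)) * (∑ j, φ j * star (φ j)) = ∑ j, φ j * star (φ j) := by
    conv_lhs => rw [Finset.mul_sum]
    exact Finset.sum_congr rfl fun j _ => by rw [← mul_assoc, leftP _ (hφ.1 j)]
  have hQP : (∑ j, φ j * star (φ j)) * (∑ i, ψ i * star (ψ i)) = ∑ i, ψ i * star (ψ i) := by
    conv_lhs => rw [Finset.mul_sum]
    exact Finset.sum_congr rfl fun i _ => by rw [← mul_assoc, left' _ (hψ.1 i)]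
  refine ⟨saP, hPP, ?_, leftP⟩
  have h := congrArg star hQP
  rw [star_mul, saP.star_eq, saQ.star_eq, hPQ] at h
  exact h.symm
end

section
/- Let B ⊂ A be an inclusion of C*-algebras and let M be a finitely generated Hilbert B-bimodule in A with finite set of generators {ψ_l}. Then the map σ_M(a) := Σ_l ψ_l a ψ_l*, defined for a in the relative commutant B' ∩ A, does not depend on the choice of the generators and defines a *-endomorphism of the C*-algebra B' ∩ A. Moreover, if A is unital then σ_M(1) = P_M, and if B is contained in the centre of A then σ_M is an endomorphism of all of A. -/
/-!
STATEMENT 1: Let `B ⊂ A` be an inclusion of C*-algebras and `M` a finitely generated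
Hilbert `B`-bimodule in `A` with generators `{ψ_l}`. Then `σ_M(a) := Σ_l ψ_l a ψ_l*`,
defined for `a` in the relative commutant `B' ∩ A`, does not depend on the choice of
the generators and defines a *-endomorphism of the C*-algebra `B' ∩ A`. Moreover, if
`A` is unital then `σ_M(1) = P_M`, and if `B` is contained in the centre of `A` then
`σ_M` is an endomorphism of all of `A`.
-/

open scoped BigOperators

/-- The inner endomorphism `σ_M(a) = Σ_l ψ_l a ψ_l*` associated to a finite family
`ψ` of elements of `A`. -/
def innerEndo {A : Type*} [NonUnitalCStarAlgebra A] {ι : Type*} [Fintype ι]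
    (ψ : ι → A) (a : A) : A :=
  ∑ i, ψ i * a * star (ψ i)

theorem innerEndo_mul_mem_aux {A : Type*} [CStarAlgebra A] {B : NonUnitalStarSubalgebra ℂ A}
    (M : HilbertBimoduleIn A B) {ι : Type*} [Fintype ι] (ψ : ι → A)
    (hψ : M.IsGeneratingFamily ψ) {a : A} (ha : a ∈ Set.centralizer (B : Set A))
    {m : A} (hm : m ∈ M.carrier) : innerEndo ψ a * m = m * a := by
  conv_rhs => rw [hψ.2 m hm]
  rw [innerEndo, Finset.sum_mul, Finset.sum_mul]
  refine Finset.sum_congr rfl fun i _ => ?_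
  have h := Set.mem_centralizer_iff.1 ha _ (M.inner_mem _ (hψ.1 i) _ hm)
  rw [mul_assoc, mul_assoc, ← h]
  simp only [mul_assoc]

theorem star_mul_support_aux {A : Type*} [CStarAlgebra A] {B : NonUnitalStarSubalgebra ℂ A}
    (M : HilbertBimoduleIn A B) {ι : Type*} [Fintype ι] (ψ : ι → A)
    (hψ : M.IsGeneratingFamily ψ)
    {m : A} (hm : m ∈ M.carrier) : star m * ∑ i, ψ i * star (ψ i) = star m := by
  conv_rhs => rw [hψ.2 m hm]
  simp [Finset.mul_sum, star_sum, mul_assoc]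

theorem innerEndo_indep_aux {A : Type*} [CStarAlgebra A] {B : NonUnitalStarSubalgebra ℂ A}
    (M : HilbertBimoduleIn A B) {ι κ : Type*} [Fintype ι] [Fintype κ] (ψ : ι → A) (φ : κ → A)
    (hψ : M.IsGeneratingFamily ψ) (hφ : M.IsGeneratingFamily φ)
    {a : A} (ha : a ∈ Set.centralizer (B : Set A)) : innerEndo ψ a = innerEndo φ a := by
  have h1 : innerEndo φ a = innerEndo ψ a * ∑ j, φ j * star (φ j) := by
    rw [Finset.mul_sum, innerEndo]
    refine Finset.sum_congr rfl fun j _ => ?_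
    rw [← mul_assoc, innerEndo_mul_mem_aux M ψ hψ ha (hφ.1 j)]
  rw [h1, innerEndo, Finset.sum_mul]
  refine Finset.sum_congr rfl fun i _ => ?_
  rw [mul_assoc (ψ i * a), star_mul_support_aux M φ hφ (hψ.1 i)]

theorem innerEndo_mul_aux {A : Type*} [CStarAlgebra A] {B : NonUnitalStarSubalgebra ℂ A}
    (M : HilbertBimoduleIn A B) {ι : Type*} [Fintype ι] (ψ : ι → A)
    (hψ : M.IsGeneratingFamily ψ) {a : A} (ha : a ∈ Set.centralizer (B : Set A)) (b : A) :
    innerEndo ψ (a * b) = innerEndo ψ a * innerEndo ψ b := by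
  conv_rhs => rw [innerEndo.eq_1 ψ b, Finset.mul_sum]
  rw [innerEndo]
  refine Finset.sum_congr rfl fun i _ => ?_
  rw [← mul_assoc, ← mul_assoc, ← mul_assoc, innerEndo_mul_mem_aux M ψ hψ ha (hψ.1 i)]

theorem innerEndo_star_aux {A : Type*} [CStarAlgebra A] {ι : Type*} [Fintype ι] (ψ : ι → A)
    (a : A) : innerEndo ψ (star a) = star (innerEndo ψ a) := by
  simp [innerEndo, star_sum, mul_assoc]

theorem innerEndo_mem_aux {A : Type*} [CStarAlgebra A] {B : NonUnitalStarSubalgebra ℂ A}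
    (M : HilbertBimoduleIn A B) {ι : Type*} [Fintype ι] (ψ : ι → A)
    (hψ : M.IsGeneratingFamily ψ) {a : A} (ha : a ∈ Set.centralizer (B : Set A)) :
    innerEndo ψ a ∈ Set.centralizer (B : Set A) := by
  rw [Set.mem_centralizer_iff]
  intro b hb
  have h1 : b * innerEndo ψ a = innerEndo ψ a * (b * ∑ i, ψ i * star (ψ i)) := by
    conv_lhs => rw [innerEndo, Finset.mul_sum]
    rw [Finset.mul_sum, Finset.mul_sum]
    refine Finset.sum_congr rfl fun i _ => ?_
    rw [← mul_assoc, ← mul_assoc, ← mul_assoc b, ← mul_assoc,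
      innerEndo_mul_mem_aux M ψ hψ ha (M.left_mul_mem b hb _ (hψ.1 i))]
  rw [h1, innerEndo, Finset.sum_mul, Finset.sum_mul]
  refine Finset.sum_congr rfl fun i _ => ?_
  have h2 := star_mul_support_aux M ψ hψ (M.left_mul_mem _ (star_mem hb) _ (hψ.1 i))
  rw [star_mul, star_star] at h2
  rw [mul_assoc, ← mul_assoc (star (ψ i)), h2, mul_assoc (ψ i * a)]

/-- `σ_M` does not depend on the choice of generators (on the relative commutant
`B' ∩ A`), it is a *-endomorphism of `B' ∩ A`; if `A` is unital then `σ_M 1 = P_M`;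
and if `B ⊆ Z(A)` then `σ_M` is multiplicative and star-preserving on all of `A`,
i.e. an endomorphism of `A`. (Here `A` is taken unital so that the clause
`σ_M(1) = P_M` makes sense; ℂ-linearity of `σ_M` holds by construction.) -/
theorem innerEndo_of_fin_gen_hilbert_bimodule_in
    {A : Type*} [CStarAlgebra A] (B : NonUnitalStarSubalgebra ℂ A)
    (hB : IsClosed (B : Set A)) (M : HilbertBimoduleIn A B)
    {ι κ : Type*} [Fintype ι] [Fintype κ] (ψ : ι → A) (φ : κ → A)
    (hψ : M.IsGeneratingFamily ψ) (hφ : M.IsGeneratingFamily φ) :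
    -- independence of the choice of generators on `B' ∩ A`
    (∀ a ∈ Set.centralizer (B : Set A), innerEndo ψ a = innerEndo φ a) ∧
    -- `σ_M` maps `B' ∩ A` into itself
    (∀ a ∈ Set.centralizer (B : Set A), innerEndo ψ a ∈ Set.centralizer (B : Set A)) ∧
    -- `σ_M` is a *-homomorphism on `B' ∩ A`
    (∀ a ∈ Set.centralizer (B : Set A), ∀ b ∈ Set.centralizer (B : Set A),
      innerEndo ψ (a * b) = innerEndo ψ a * innerEndo ψ b) ∧
    (∀ a ∈ Set.centralizer (B : Set A), innerEndo ψ (star a) = star (innerEndo ψ a)) ∧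
    -- `σ_M(1)` is the support `P_M`
    innerEndo ψ (1 : A) = ∑ i, ψ i * star (ψ i) ∧
    -- if `B` is contained in the centre of `A`, `σ_M` is an endomorphism of `A`
    ((B : Set A) ⊆ Set.center A →
      (∀ a b : A, innerEndo ψ (a * b) = innerEndo ψ a * innerEndo ψ b) ∧
      (∀ a : A, innerEndo ψ (star a) = star (innerEndo ψ a)) ∧
      (∀ a : A, innerEndo ψ a = innerEndo φ a)) := by
  refine ⟨fun a ha => innerEndo_indep_aux M ψ φ hψ hφ ha,
    fun a ha => innerEndo_mem_aux M ψ hψ ha,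
    fun a ha b _ => innerEndo_mul_aux M ψ hψ ha b,
    fun a _ => innerEndo_star_aux ψ a, by simp [innerEndo], fun hc => ?_⟩
  have hall : ∀ a : A, a ∈ Set.centralizer (B : Set A) := fun a =>
    Set.mem_centralizer_iff.2 fun b hb => (Set.mem_center_iff.1 (hc hb)).comm a
  exact ⟨fun a b => innerEndo_mul_aux M ψ hψ (hall a) b, fun a => innerEndo_star_aux ψ a,
    fun a => innerEndo_indep_aux M ψ φ hψ hφ (hall a)⟩
end

section
/- Let ρ be an endomorphism of a C*-algebra A. Then Z^ρ := { f ∈ ZM(A) : ρ(fa) = f ρ(a) for all a ∈ A } is a unital C*-subalgebra of ZM(A), so that A is a Z^ρ-algebra and ρ is Z^ρ-equivariant; moreover Z^ρ is an invariant of the sector of ρ: if σ(a) = u ρ(a) u* for all a ∈ A, where u ∈ M(A) is unitary, then Z^σ = Z^ρ. -/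
/-!
STATEMENT 2: Let `ρ` be an endomorphism of a C*-algebra `A`. Then
`Z^ρ := { f ∈ ZM(A) : ρ(fa) = f ρ(a) for all a ∈ A }` is a unital C*-subalgebra of
`ZM(A)` (the centre of the multiplier algebra `M(A)`), so that `A` is a `Z^ρ`-algebra
and `ρ` is `Z^ρ`-equivariant; moreover `Z^ρ` is an invariant of the sector of `ρ`:
if `σ(a) = u ρ(a) u*` for all `a ∈ A` with `u ∈ M(A)` unitary, then `Z^σ = Z^ρ`.

Here the multiplier algebra is realized as the double centralizer algebra `𝓜(ℂ, A)`,
and for a multiplier `f` and `a ∈ A` the product `f·a ∈ A` is `f.fst a` (the left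
action) while `a·f` is `f.snd a` (the right action).
-/

open scoped MultiplierAlgebra

/-- `Z^ρ ⊆ M(A)`: the central multipliers `f` such that `ρ(f·a) = f·ρ(a)` for all `a`. -/
def sectorCenter {A : Type*} [NonUnitalCStarAlgebra A] (ρ : A →⋆ₙₐ[ℂ] A) :
    Set 𝓜(ℂ, A) :=
  {f : 𝓜(ℂ, A) | f ∈ Set.center 𝓜(ℂ, A) ∧ ∀ a : A, ρ (f.fst a) = f.fst (ρ a)}

theorem sc_left_cancel {A : Type*} [NonUnitalCStarAlgebra A] {a b : A}
    (h : ∀ y : A, y * a = y * b) : a = b := by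
  have h1 : star (a - b) * (a - b) = 0 := by
    rw [mul_sub, h, sub_self]
  exact sub_eq_zero.mp (CStarRing.star_mul_self_eq_zero_iff _ |>.mp h1)

theorem sc_right_cancel {A : Type*} [NonUnitalCStarAlgebra A] {a b : A}
    (h : ∀ y : A, a * y = b * y) : a = b := by
  have h1 : (a - b) * star (a - b) = 0 := by
    rw [sub_mul, h, sub_self]
  exact sub_eq_zero.mp (CStarRing.mul_star_self_eq_zero_iff _ |>.mp h1)

theorem sc_fst_mul {A : Type*} [NonUnitalCStarAlgebra A] (f : 𝓜(ℂ, A)) (a b : A) :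
    f.fst (a * b) = f.fst a * b := by
  apply sc_left_cancel
  intro y
  rw [← f.central, ← mul_assoc, ← mul_assoc, f.central]

theorem sc_coe_fst {A : Type*} [NonUnitalCStarAlgebra A] (f : 𝓜(ℂ, A)) (a : A) :
    ((f.fst a : A) : 𝓜(ℂ, A)) = f * (a : 𝓜(ℂ, A)) := by
  apply DoubleCentralizer.ext
  apply Prod.ext
  · ext z
    exact (sc_fst_mul f a z).symm
  · ext z
    exact (f.central z a).symm

theorem sc_coe_inj {A : Type*} [NonUnitalCStarAlgebra A] {a b : A}
    (h : (a : 𝓜(ℂ, A)) = (b : 𝓜(ℂ, A))) : a = b := by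
  apply sc_right_cancel
  intro y
  exact congrArg (fun f : 𝓜(ℂ, A) => f.fst y) h

theorem sc_fst_eq_snd {A : Type*} [NonUnitalCStarAlgebra A] {f : 𝓜(ℂ, A)}
    (hf : f ∈ Set.center 𝓜(ℂ, A)) (a : A) : f.fst a = f.snd a := by
  apply sc_right_cancel
  intro y
  have h : f * (a : 𝓜(ℂ, A)) = (a : 𝓜(ℂ, A)) * f := (hf.comm _)
  have h2 : f.fst (a * y) = a * f.fst y := congrArg (fun f : 𝓜(ℂ, A) => f.fst y) h
  rw [f.central, ← h2, sc_fst_mul]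

theorem sc_subset {A : Type*} [NonUnitalCStarAlgebra A] (ρ σ : A →⋆ₙₐ[ℂ] A) (u v : 𝓜(ℂ, A))
    (h : ∀ a : A, (σ a : 𝓜(ℂ, A)) = u * (ρ a : 𝓜(ℂ, A)) * v) :
    sectorCenter ρ ⊆ sectorCenter σ := by
  rintro f ⟨hf, hρ⟩
  refine ⟨hf, fun a => sc_coe_inj ?_⟩
  have hc : f * u = u * f := hf.comm u
  rw [h, hρ, sc_coe_fst, sc_coe_fst, h, ← mul_assoc u f, ← hc]
  simp only [mul_assoc]

theorem sectorCenter_is_unital_cstar_subalgebra_and_sector_invariant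
    {A : Type*} [NonUnitalCStarAlgebra A] (ρ : A →⋆ₙₐ[ℂ] A) :
    -- `Z^ρ` is a unital *-subalgebra of the centre of `M(A)` ...
    (1 : 𝓜(ℂ, A)) ∈ sectorCenter ρ ∧
    (∀ f ∈ sectorCenter ρ, ∀ g ∈ sectorCenter ρ, f + g ∈ sectorCenter ρ) ∧
    (∀ f ∈ sectorCenter ρ, ∀ g ∈ sectorCenter ρ, f * g ∈ sectorCenter ρ) ∧
    (∀ (c : ℂ), ∀ f ∈ sectorCenter ρ, c • f ∈ sectorCenter ρ) ∧
    (∀ f ∈ sectorCenter ρ, star f ∈ sectorCenter ρ) ∧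
    -- ... which is norm-closed (hence a unital commutative C*-algebra):
    IsClosed (sectorCenter ρ) ∧
    (∀ f ∈ sectorCenter ρ, ∀ g ∈ sectorCenter ρ, f * g = g * f) ∧
    -- `A` is a `Z^ρ`-algebra: elements of `Z^ρ` are central multipliers of `A`
    -- (left and right actions coincide and commute with multiplication in `A`) ...
    (∀ f ∈ sectorCenter ρ, ∀ a : A, f.fst a = f.snd a) ∧
    (∀ f ∈ sectorCenter ρ, ∀ a b : A, f.fst (a * b) = a * f.fst b ∧
      f.fst (a * b) = f.fst a * b) ∧
    -- ... and `ρ` is `Z^ρ`-equivariant: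
    (∀ f ∈ sectorCenter ρ, ∀ a : A, ρ (f.fst a) = f.fst (ρ a)) ∧
    -- `Z^ρ` is an invariant of the sector of `ρ`:
    (∀ (σ : A →⋆ₙₐ[ℂ] A) (u : 𝓜(ℂ, A)), star u * u = 1 → u * star u = 1 →
      (∀ a : A, (σ a : 𝓜(ℂ, A)) = u * (ρ a : 𝓜(ℂ, A)) * star u) →
      sectorCenter σ = sectorCenter ρ) := by
  refine ⟨⟨Set.one_mem_center, fun a => rfl⟩, ?_, ?_, ?_, ?_, ?_, ?_, ?_, ?_, ?_, ?_⟩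
  · rintro f ⟨hf, hf'⟩ g ⟨hg, hg'⟩
    refine ⟨Set.add_mem_center hf hg, fun a => ?_⟩
    change ρ (f.fst a + g.fst a) = f.fst (ρ a) + g.fst (ρ a)
    rw [map_add, hf', hg']
  · rintro f ⟨hf, hf'⟩ g ⟨hg, hg'⟩
    refine ⟨Set.mul_mem_center hf hg, fun a => ?_⟩
    change ρ (f.fst (g.fst a)) = f.fst (g.fst (ρ a))
    rw [hf', hg']
  · rintro c f ⟨hf, hf'⟩
    refine ⟨Set.smul_mem_center c hf, fun a => ?_⟩
    change ρ (c • f.fst a) = c • f.fst (ρ a)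
    rw [map_smul, hf']
  · rintro f ⟨hf, hf'⟩
    refine ⟨Set.star_mem_center hf, fun a => ?_⟩
    rw [DoubleCentralizer.star_fst, DoubleCentralizer.star_fst, ← sc_fst_eq_snd hf,
      ← sc_fst_eq_snd hf, map_star, hf', map_star]
  · have hfst : ∀ a : A, Continuous (fun f : 𝓜(ℂ, A) => f.fst a) := by
      intro a
      have h0 : Continuous (DoubleCentralizer.toProdMulOpposite (𝕜 := ℂ) (A := A)) :=
        DoubleCentralizer.isUniformEmbedding_toProdMulOpposite.uniformContinuous.continuous
      have h1 : Continuous (fun f : 𝓜(ℂ, A) => (DoubleCentralizer.toProdMulOpposite f).1) :=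
        h0.fst
      exact h1.clm_apply continuous_const
    have hρ : Continuous ρ := 
      AddMonoidHomClass.continuous_of_bound ρ 1
        (by simpa only [one_mul] using NonUnitalStarAlgHom.norm_apply_le ρ)
    have e : sectorCenter ρ = Set.center 𝓜(ℂ, A) ∩
        ⋂ a : A, {f : 𝓜(ℂ, A) | ρ (f.fst a) = f.fst (ρ a)} := by
      ext f
      simp [sectorCenter]
    rw [e]
    refine IsClosed.inter (by rw [← Set.centralizer_univ]; exact Set.isClosed_centralizer _) (isClosed_iInter fun a => ?_)
    exact isClosed_eq (hρ.comp (hfst a)) (hfst (ρ a))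
  · rintro f ⟨hf, -⟩ g -
    exact hf.comm g
  · rintro f ⟨hf, -⟩ a
    exact sc_fst_eq_snd hf a
  · rintro f ⟨hf, -⟩ a b
    refine ⟨?_, sc_fst_mul f a b⟩
    rw [sc_fst_mul, sc_fst_eq_snd hf, f.central]
  · rintro f ⟨-, hf⟩ a
    exact hf a
  · intro σ u hu hu' h
    refine Set.Subset.antisymm (sc_subset σ ρ (star u) u fun a => ?_) (sc_subset ρ σ u _ h)
    rw [h]
    calc (ρ a : 𝓜(ℂ, A)) = (star u * u) * (ρ a : 𝓜(ℂ, A)) * (star u * u) := by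
          rw [hu, one_mul, mul_one]
      _ = _ := by simp only [mul_assoc]
end

section
/- Let A be a C*-algebra with multiplier algebra M(A), and let s ∈ M(A) be an isometry defining the inner endomorphism ρ(a) := s a s* of A. Then the intertwiner space (ι, ρ) := { t ∈ M(A) : ρ(a) t = t a for all a ∈ A } equals ZM(A)·s, the closed Hilbert ZM(A)-bimodule generated by s. -/
open scoped MultiplierAlgebra

theorem aux_ext_snd {A : Type*} [NonUnitalCStarAlgebra A] {x y : 𝓜(ℂ, A)}
    (h : ∀ b, x.snd b = y.snd b) : x = y := by
  rw [← sub_eq_zero, ← norm_eq_zero, ← DoubleCentralizer.norm_snd, norm_eq_zero]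
  ext b
  simp [h]

theorem aux_snd_mul_coe {A : Type*} [NonUnitalCStarAlgebra A] (m : 𝓜(ℂ, A)) (a b : A) :
    (m * (a : 𝓜(ℂ, A))).snd b = m.snd b * a := by
  simp [DoubleCentralizer.mul_snd]

theorem aux_ext_coe {A : Type*} [NonUnitalCStarAlgebra A] {x y : 𝓜(ℂ, A)}
    (h : ∀ a : A, x * (a : 𝓜(ℂ, A)) = y * (a : 𝓜(ℂ, A))) : x = y := by
  apply aux_ext_snd
  intro b
  rw [← sub_eq_zero, ← CStarRing.mul_star_self_eq_zero_iff]
  have h1 := congrArg (fun m : 𝓜(ℂ, A) => m.snd b) (h (star (x.snd b - y.snd b)))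
  simp only [aux_snd_mul_coe] at h1
  rw [sub_mul, h1, sub_self]

theorem aux_mul_coe {A : Type*} [NonUnitalCStarAlgebra A] (m : 𝓜(ℂ, A)) (a : A) :
    m * (a : 𝓜(ℂ, A)) = ((m.fst a : A) : 𝓜(ℂ, A)) := by
  apply aux_ext_snd
  intro b
  rw [aux_snd_mul_coe, m.central]
  simp

theorem aux_central {A : Type*} [NonUnitalCStarAlgebra A] {z : 𝓜(ℂ, A)}
    (h : ∀ a : A, (a : 𝓜(ℂ, A)) * z = z * (a : 𝓜(ℂ, A))) : z ∈ Set.center 𝓜(ℂ, A) := by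
  rw [Semigroup.mem_center_iff]
  intro m
  apply aux_ext_coe
  intro a
  rw [mul_assoc, ← h, ← mul_assoc, mul_assoc z, aux_mul_coe, h]

theorem intertwiners_of_inner_endomorphism_eq_center_mul_isometry
    {A : Type*} [NonUnitalCStarAlgebra A]
    (s : 𝓜(ℂ, A)) (hs : star s * s = 1)
    (ρ : A →⋆ₙₐ[ℂ] A)
    (hρ : ∀ a : A, (ρ a : 𝓜(ℂ, A)) = s * (a : 𝓜(ℂ, A)) * star s) :
    {t : 𝓜(ℂ, A) | ∀ a : A, (ρ a : 𝓜(ℂ, A)) * t = t * (a : 𝓜(ℂ, A))} =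
      {t : 𝓜(ℂ, A) | ∃ z ∈ Set.center 𝓜(ℂ, A), t = z * s} := by
  ext t
  simp only [Set.mem_setOf_eq, hρ]
  constructor
  · intro h
    have hc : ∀ a : A, star s * (t * (a : 𝓜(ℂ, A))) = (a : 𝓜(ℂ, A)) * (star s * t) := by
      intro a
      rw [← h a]
      simp only [← mul_assoc]
      rw [hs, one_mul]
    have hz : star s * t ∈ Set.center 𝓜(ℂ, A) :=
      aux_central fun a => by rw [← hc, mul_assoc]
    refine ⟨star s * t, hz, ?_⟩
    rw [← Semigroup.mem_center_iff.1 hz s]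
    apply aux_ext_coe
    intro a
    rw [mul_assoc s, mul_assoc (star s), hc, ← h a]
    simp only [mul_assoc]
  · rintro ⟨z, hz, rfl⟩ a
    have hz' := Semigroup.mem_center_iff.1 hz
    rw [← mul_assoc, hz', mul_assoc, mul_assoc, hs, mul_one, mul_assoc]
end

section
/- Let X be a compact Hausdorff space and C a C(X)-category. Then there exists a family { x_* : C → C_x }_{x∈X} of C*-functors (the fiber functors, where C_x has arrows the quotients (ρ,σ)_x := (ρ,σ) ⊗_{(ρ,ρ)} (ρ,ρ)_x and (ρ,ρ)_x := (ρ,ρ)/((ρ,ρ)·C_x(X))) such that for every arrow t ∈ (ρ,σ), writing t_x := x_*(t): the norm function x ↦ ‖t_x‖ is upper semicontinuous on X, and ‖t‖ = sup_{x∈X} ‖t_x‖. -/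
/-!
STATEMENT 9: Let `X` be a compact Hausdorff space and `C` a `C(X)`-category. Then
there exists a family `{ x_* : C → C_x }_{x∈X}` of C*-functors (the fiber functors,
where `C_x` has arrows the fibers `(ρ,σ)_x := (ρ,σ) ⊗_{(ρ,ρ)} (ρ,ρ)_x`, with
`(ρ,ρ)_x := (ρ,ρ)/((ρ,ρ)·C_x(X))`) such that for every arrow `t ∈ (ρ,σ)`, writing
`t_x := x_*(t)`: the norm function `x ↦ ‖t_x‖` is upper semicontinuous on `X`, and
`‖t‖ = sup_{x∈X} ‖t_x‖`.

The fiber `(ρ,σ)_x` is realized as the quotient of `(ρ,σ)` by the closed subspace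
generated by `C_x(X)·(ρ,σ)` (which is canonically isomorphic to the tensor product
fiber), `x_*` as the quotient map, and `‖t_x‖` as the corresponding quotient
seminorm; that the `x_*` are C*-functors into C*-categories is expressed by the
compatibility of the quotient seminorms with the operations of `C`.
-/

universe u v w u' v'

/-- A C*-category structure on a family of Banach spaces `Hom ρ σ` indexed by objects:
bilinear norm-decreasing composition, identities, and an isometric involutive
contravariant `*` satisfying the C*-identity. -/
structure CStarCategoryStruct {Obj : Type u} (Hom : Obj → Obj → Type v)
    [∀ ρ σ, NormedAddCommGroup (Hom ρ σ)] [∀ ρ σ, NormedSpace ℂ (Hom ρ σ)] :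
    Type max u v where
  comp : ∀ {ρ σ τ : Obj}, Hom σ τ → Hom ρ σ → Hom ρ τ
  id : ∀ ρ : Obj, Hom ρ ρ
  star : ∀ {ρ σ : Obj}, Hom ρ σ → Hom σ ρ
  comp_assoc : ∀ {ρ σ τ υ : Obj} (t : Hom τ υ) (u : Hom σ τ) (v : Hom ρ σ),
    comp (comp t u) v = comp t (comp u v)
  id_comp : ∀ {ρ σ : Obj} (t : Hom ρ σ), comp (id σ) t = t
  comp_id : ∀ {ρ σ : Obj} (t : Hom ρ σ), comp t (id ρ) = t
  add_comp : ∀ {ρ σ τ : Obj} (t t' : Hom σ τ) (u : Hom ρ σ),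
    comp (t + t') u = comp t u + comp t' u
  comp_add : ∀ {ρ σ τ : Obj} (t : Hom σ τ) (u u' : Hom ρ σ),
    comp t (u + u') = comp t u + comp t u'
  smul_comp : ∀ {ρ σ τ : Obj} (c : ℂ) (t : Hom σ τ) (u : Hom ρ σ),
    comp (c • t) u = c • comp t u
  comp_smul : ∀ {ρ σ τ : Obj} (c : ℂ) (t : Hom σ τ) (u : Hom ρ σ),
    comp t (c • u) = c • comp t u
  norm_comp_le : ∀ {ρ σ τ : Obj} (t : Hom σ τ) (u : Hom ρ σ), ‖comp t u‖ ≤ ‖t‖ * ‖u‖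
  star_star : ∀ {ρ σ : Obj} (t : Hom ρ σ), star (star t) = t
  star_add : ∀ {ρ σ : Obj} (t t' : Hom ρ σ), star (t + t') = star t + star t'
  star_smul : ∀ {ρ σ : Obj} (c : ℂ) (t : Hom ρ σ),
    star (c • t) = (starRingEnd ℂ) c • star t
  star_comp : ∀ {ρ σ τ : Obj} (t : Hom σ τ) (u : Hom ρ σ),
    star (comp t u) = comp (star u) (star t)
  star_id : ∀ ρ : Obj, star (id ρ) = id ρ
  norm_star : ∀ {ρ σ : Obj} (t : Hom ρ σ), ‖star t‖ = ‖t‖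
  cstar_identity : ∀ {ρ σ : Obj} (t : Hom ρ σ), ‖comp (star t) t‖ = ‖t‖ ^ 2


variable {Obj : Type u} {Hom : Obj → Obj → Type v}
  [∀ ρ σ, NormedAddCommGroup (Hom ρ σ)] [∀ ρ σ, NormedSpace ℂ (Hom ρ σ)]

/-- A `C(X)`-category: a C*-category `C` equipped with a unital *-homomorphism of
`C(X)` into `Z(C)` (i.e., a central action of `C(X)` on the arrow spaces, acting
identically on the left and on the right). -/
structure CXAction (X : Type w) [TopologicalSpace X] [CompactSpace X] [T2Space X]
    (C : CStarCategoryStruct Hom) : Type _ where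
  act : C(X, ℂ) → ∀ ρ σ : Obj, Hom ρ σ → Hom ρ σ
  act_add : ∀ f (ρ σ : Obj) (t t' : Hom ρ σ), act f ρ σ (t + t') = act f ρ σ t + act f ρ σ t'
  act_smul : ∀ f (ρ σ : Obj) (c : ℂ) (t : Hom ρ σ), act f ρ σ (c • t) = c • act f ρ σ t
  add_act : ∀ f g (ρ σ : Obj) (t : Hom ρ σ), act (f + g) ρ σ t = act f ρ σ t + act g ρ σ t
  smul_act : ∀ (c : ℂ) f (ρ σ : Obj) (t : Hom ρ σ), act (c • f) ρ σ t = c • act f ρ σ t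
  mul_act : ∀ f g (ρ σ : Obj) (t : Hom ρ σ), act (f * g) ρ σ t = act f ρ σ (act g ρ σ t)
  one_act : ∀ (ρ σ : Obj) (t : Hom ρ σ), act 1 ρ σ t = t
  left_mult : ∀ f {ρ σ τ : Obj} (t : Hom σ τ) (u : Hom ρ σ),
    act f ρ τ (C.comp t u) = C.comp (act f σ τ t) u
  right_mult : ∀ f {ρ σ τ : Obj} (t : Hom σ τ) (u : Hom ρ σ),
    act f ρ τ (C.comp t u) = C.comp t (act f ρ σ u)
  star_act : ∀ f (ρ σ : Obj) (t : Hom ρ σ),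
    C.star (act f ρ σ t) = act (star f) σ ρ (C.star t)
  norm_act_le : ∀ f (ρ σ : Obj) (t : Hom ρ σ), ‖act f ρ σ t‖ ≤ ‖f‖ * ‖t‖

variable {X : Type w} [TopologicalSpace X] [CompactSpace X] [T2Space X]

/-- The kernel of the fiber functor `x_*` on `(ρ,σ)`: the closed subspace generated
by `C_x(X)·(ρ,σ)`, where `C_x(X)` is the ideal of functions vanishing at `x`. -/
def fiberNull {C : CStarCategoryStruct Hom} (A : CXAction X C) (x : X) (ρ σ : Obj) :
    Submodule ℂ (Hom ρ σ) :=
  (Submodule.span ℂ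
    {s : Hom ρ σ | ∃ f : C(X, ℂ), ∃ t : Hom ρ σ, f x = 0 ∧ s = A.act f ρ σ t}).topologicalClosure

/-- The fiber seminorm `‖t_x‖`: the quotient seminorm of `(ρ,σ)_x = (ρ,σ)/fiberNull`. -/
noncomputable def fiberSeminorm {C : CStarCategoryStruct Hom} (A : CXAction X C)
    (x : X) {ρ σ : Obj} (t : Hom ρ σ) : ℝ :=
  sInf {r : ℝ | ∃ s ∈ fiberNull A x ρ σ, r = ‖t - s‖}

/-- A real bump function viewed as a complex one. -/
def cxBump (f : C(X, ℝ)) : C(X, ℂ) := ⟨fun x => (f x : ℂ), by fun_prop⟩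

/-- `f` is a cutoff function supported in `U`. -/
def IsCut (U : Set X) (f : C(X, ℝ)) : Prop :=
  (∀ y, 0 ≤ f y) ∧ (∀ y, f y ≤ 1) ∧ ∀ y, y ∉ U → f y = 0

theorem cxBump_mul (f g : C(X, ℝ)) : cxBump (f * g) = cxBump f * cxBump g := by
  ext y; simp [cxBump]

theorem cxBump_star (f : C(X, ℝ)) : star (cxBump f) = cxBump f := by
  ext y; simp [cxBump]

theorem cxBump_norm_le {U : Set X} {f : C(X, ℝ)} (hf : IsCut U f) : ‖cxBump f‖ ≤ 1 := by
  rw [ContinuousMap.norm_le _ zero_le_one]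
  intro y
  simp only [cxBump, ContinuousMap.coe_mk, Complex.norm_real, Real.norm_eq_abs]
  rw [abs_of_nonneg (hf.1 y)]
  exact hf.2.1 y

theorem exists_cut {U : Set X} (hU : IsOpen U) {x : X} (hx : x ∈ U) :
    ∃ f : C(X, ℝ), IsCut U f ∧ f x = 1 := by
  obtain ⟨f, h0, h1, h⟩ := exists_continuous_zero_one_of_isClosed (s := Uᶜ) (t := {x})
    hU.isClosed_compl isClosed_singleton (by simpa using hx)
  exact ⟨f, ⟨fun y => (h y).1, fun y => (h y).2, fun y hy => h0 hy⟩, h1 rfl⟩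

theorem IsCut.mono {U V : Set X} (h : U ⊆ V) {f : C(X, ℝ)} (hf : IsCut U f) : IsCut V f :=
  ⟨hf.1, hf.2.1, fun y hy => hf.2.2 y fun h' => hy (h h')⟩

theorem IsCut.sq {U : Set X} {f : C(X, ℝ)} (hf : IsCut U f) : IsCut U (f * f) :=
  ⟨fun y => mul_nonneg (hf.1 y) (hf.1 y), fun y => mul_le_one₀ (hf.2.1 y) (hf.1 y) (hf.2.1 y),
    fun y hy => by simp [hf.2.2 y hy]⟩

theorem IsCut.exists_sqrt {U : Set X} {f : C(X, ℝ)} (hf : IsCut U f) :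
    ∃ g : C(X, ℝ), IsCut U g ∧ g * g = f := by
  refine ⟨⟨fun y => Real.sqrt (f y), by fun_prop⟩, ⟨fun y => Real.sqrt_nonneg _,
    fun y => Real.sqrt_le_one.2 (hf.2.1 y), fun y hy => by simp [hf.2.2 y hy]⟩, ?_⟩
  ext y
  simp [Real.mul_self_sqrt (hf.1 y)]

section
variable {C : CStarCategoryStruct Hom} (A : CXAction X C)

theorem act_sub' (f : C(X, ℂ)) {ρ σ : Obj} (t t' : Hom ρ σ) :
    A.act f ρ σ (t - t') = A.act f ρ σ t - A.act f ρ σ t' := by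
  have h := A.act_add f ρ σ (t - t') t'
  rw [sub_add_cancel] at h
  rw [h, add_sub_cancel_right]

theorem act_zero' (f : C(X, ℂ)) {ρ σ : Obj} : A.act f ρ σ 0 = 0 := by
  simpa using act_sub' A f (0 : Hom ρ σ) 0

theorem zero_act' {ρ σ : Obj} (t : Hom ρ σ) : A.act 0 ρ σ t = 0 := by
  simpa using A.smul_act 0 0 ρ σ t

theorem sum_act' {ι : Type*} (s : Finset ι) (f : ι → C(X, ℂ)) {ρ σ : Obj} (t : Hom ρ σ) :
    A.act (∑ i ∈ s, f i) ρ σ t = ∑ i ∈ s, A.act (f i) ρ σ t := by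
  classical
  induction s using Finset.induction_on with
  | empty => simp [zero_act']
  | insert a s ha ih => rw [Finset.sum_insert ha, Finset.sum_insert ha, A.add_act, ih]

theorem norm_cut_le {U : Set X} {f : C(X, ℝ)} (hf : IsCut U f) {ρ σ : Obj} (t : Hom ρ σ) :
    ‖A.act (cxBump f) ρ σ t‖ ≤ ‖t‖ :=
  (A.norm_act_le _ _ _ _).trans
    (mul_le_of_le_one_left (norm_nonneg _) (cxBump_norm_le hf))

theorem bddBelow_fiber (x : X) {ρ σ : Obj} (t : Hom ρ σ) :
    BddBelow {r : ℝ | ∃ s ∈ fiberNull A x ρ σ, r = ‖t - s‖} :=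
  ⟨0, by rintro r ⟨s, _, rfl⟩; exact norm_nonneg _⟩

theorem nonempty_fiber (x : X) {ρ σ : Obj} (t : Hom ρ σ) :
    {r : ℝ | ∃ s ∈ fiberNull A x ρ σ, r = ‖t - s‖}.Nonempty :=
  ⟨_, 0, Submodule.zero_mem _, rfl⟩

theorem fiber_nonneg (x : X) {ρ σ : Obj} (t : Hom ρ σ) : 0 ≤ fiberSeminorm A x t :=
  le_csInf (nonempty_fiber A x t) (by rintro r ⟨s, _, rfl⟩; exact norm_nonneg _)

theorem fiber_le_norm (x : X) {ρ σ : Obj} (t : Hom ρ σ) : fiberSeminorm A x t ≤ ‖t‖ :=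
  csInf_le (bddBelow_fiber A x t) ⟨0, Submodule.zero_mem _, by simp⟩

theorem fiber_le_act {x : X} {f : C(X, ℝ)} (hf : f x = 1) {ρ σ : Obj} (t : Hom ρ σ) :
    fiberSeminorm A x t ≤ ‖A.act (cxBump f) ρ σ t‖ := by
  refine csInf_le (bddBelow_fiber A x t) ⟨A.act (1 + (-1 : ℂ) • cxBump f) ρ σ t, ?_, ?_⟩
  · apply Submodule.le_topologicalClosure
    apply Submodule.subset_span
    exact ⟨_, t, by simp [cxBump, hf], rfl⟩
  · rw [A.add_act, A.one_act, A.smul_act]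
    simp

/-- Elements of the null space are locally small. -/
theorem null_local {x : X} {ρ σ : Obj} {s : Hom ρ σ} (hs : s ∈ fiberNull A x ρ σ)
    {ε : ℝ} (hε : 0 < ε) : ∃ U : Set X, IsOpen U ∧ x ∈ U ∧ ∀ f : C(X, ℝ), IsCut U f →
      ‖A.act (cxBump f) ρ σ s‖ ≤ ε := by
  have key : ∀ s ∈ Submodule.span ℂ
      {s : Hom ρ σ | ∃ f : C(X, ℂ), ∃ t : Hom ρ σ, f x = 0 ∧ s = A.act f ρ σ t},
      ∀ ε : ℝ, 0 < ε → ∃ U : Set X, IsOpen U ∧ x ∈ U ∧ ∀ f : C(X, ℝ), IsCut U f →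
      ‖A.act (cxBump f) ρ σ s‖ ≤ ε := by
    intro s hs
    induction hs using Submodule.span_induction with
    | mem s h =>
      obtain ⟨g, t, hg, rfl⟩ := h
      intro ε hε
      have hd : 0 < ε / (‖t‖ + 1) := by positivity
      refine ⟨{y | ‖g y‖ < ε / (‖t‖ + 1)}, isOpen_lt (by fun_prop) (by fun_prop),
        by simpa [hg] using hd, fun f hf => ?_⟩
      rw [← A.mul_act]
      refine (A.norm_act_le _ _ _ _).trans ?_
      have h1 : ‖cxBump f * g‖ ≤ ε / (‖t‖ + 1) := by
        rw [ContinuousMap.norm_le _ hd.le]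
        intro y
        by_cases hy : ‖g y‖ < ε / (‖t‖ + 1)
        · simp only [cxBump, ContinuousMap.mul_apply, ContinuousMap.coe_mk, norm_mul,
            Complex.norm_real, Real.norm_eq_abs]
          rw [abs_of_nonneg (hf.1 y)]
          exact (mul_le_of_le_one_left (norm_nonneg _) (hf.2.1 y)).trans hy.le
        · have := hf.2.2 y hy
          simp [cxBump, this, hd.le]
      calc ‖cxBump f * g‖ * ‖t‖ ≤ ε / (‖t‖ + 1) * (‖t‖ + 1) := by
            gcongr; linarith
        _ = ε := by field_simp
    | zero =>
      intro ε hε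
      exact ⟨Set.univ, isOpen_univ, trivial, fun f _ => by rw [act_zero']; simpa using hε.le⟩
    | add a b _ _ iha ihb =>
      intro ε hε
      obtain ⟨U, hU, hxU, h1⟩ := iha (ε / 2) (by positivity)
      obtain ⟨V, hV, hxV, h2⟩ := ihb (ε / 2) (by positivity)
      refine ⟨U ∩ V, hU.inter hV, ⟨hxU, hxV⟩, fun f hf => ?_⟩
      rw [A.act_add]
      have := h1 f (hf.mono Set.inter_subset_left)
      have := h2 f (hf.mono Set.inter_subset_right)
      refine (norm_add_le _ _).trans ?_
      linarith
    | smul c a _ ih =>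
      intro ε hε
      obtain ⟨U, hU, hxU, h1⟩ := ih (ε / (‖c‖ + 1)) (by positivity)
      refine ⟨U, hU, hxU, fun f hf => ?_⟩
      rw [A.act_smul, norm_smul]
      calc ‖c‖ * ‖A.act (cxBump f) ρ σ a‖ ≤ (‖c‖ + 1) * (ε / (‖c‖ + 1)) := by
            gcongr
            · linarith
            · exact h1 f hf
        _ = ε := by field_simp
  have hs' : s ∈ closure (Submodule.span ℂ
      {s : Hom ρ σ | ∃ f : C(X, ℂ), ∃ t : Hom ρ σ, f x = 0 ∧ s = A.act f ρ σ t} :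
        Set (Hom ρ σ)) := hs
  rw [Metric.mem_closure_iff] at hs'
  obtain ⟨b, hb, hd⟩ := hs' (ε / 2) (by positivity)
  obtain ⟨U, hU, hxU, h⟩ := key b hb (ε / 2) (by positivity)
  refine ⟨U, hU, hxU, fun f hf => ?_⟩
  have e : A.act (cxBump f) ρ σ s
      = A.act (cxBump f) ρ σ (s - b) + A.act (cxBump f) ρ σ b := by
    rw [← A.act_add, sub_add_cancel]
  rw [e]
  rw [dist_eq_norm] at hd
  have h1 := norm_cut_le A hf (s - b)
  have h2 := h f hf
  refine (norm_add_le _ _).trans ?_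
  linarith

theorem fiber_local {x : X} {ρ σ : Obj} {t : Hom ρ σ} {c : ℝ} (hc : fiberSeminorm A x t < c) :
    ∃ U : Set X, IsOpen U ∧ x ∈ U ∧ ∀ f : C(X, ℝ), IsCut U f →
      ‖A.act (cxBump f) ρ σ t‖ < c := by
  obtain ⟨r, ⟨s, hs, rfl⟩, hr⟩ := exists_lt_of_csInf_lt (nonempty_fiber A x t) hc
  obtain ⟨U, hU, hxU, h⟩ := null_local A hs (ε := (c - ‖t - s‖) / 2) (by linarith)
  refine ⟨U, hU, hxU, fun f hf => ?_⟩
  have e : A.act (cxBump f) ρ σ t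
      = A.act (cxBump f) ρ σ (t - s) + A.act (cxBump f) ρ σ s := by
    rw [← A.act_add, sub_add_cancel]
  rw [e]
  have h1 := norm_cut_le A hf (t - s)
  have h2 := h f hf
  refine (norm_add_le _ _).trans_lt ?_
  linarith

theorem act_star_comp (f : C(X, ℝ)) {ρ σ : Obj} (t : Hom ρ σ) :
    ‖A.act (cxBump (f * f)) ρ ρ (C.comp (C.star t) t)‖ = ‖A.act (cxBump f) ρ σ t‖ ^ 2 := by
  rw [← C.cstar_identity, A.star_act, cxBump_star, ← A.left_mult, ← A.right_mult,
    ← A.mul_act, cxBump_mul]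

theorem cover_norm_pow_le {N : ℕ} {U : Fin N → Set X} (hU : ∀ i, IsOpen (U i))
    (hc : ∀ x, ∃ i, x ∈ U i) (k : ℕ) : ∀ (ρ σ : Obj) (t : Hom ρ σ) (c : ℝ),
      (∀ i, ∀ f : C(X, ℝ), IsCut (U i) f → ‖A.act (cxBump f) ρ σ t‖ ≤ c) →
      ‖t‖ ^ (2 ^ k) ≤ N * c ^ (2 ^ k) := by
  induction k with
  | zero =>
    intro ρ σ t c h
    obtain ⟨p, hp⟩ := PartitionOfUnity.exists_isSubordinate (s := (Set.univ : Set X))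
      isClosed_univ U hU (fun x _ => Set.mem_iUnion.2 (hc x))
    have hcut : ∀ i, IsCut (U i) (p i) := fun i =>
      ⟨fun y => p.nonneg i y, fun y => p.le_one i y, fun y hy => by
        by_contra h0
        exact hy (hp i (subset_tsupport _ h0))⟩
    have hsum : ∑ i, cxBump (p i) = 1 := by
      ext y
      have h1 := p.sum_eq_one (Set.mem_univ y)
      rw [finsum_eq_sum_of_fintype] at h1
      simp only [ContinuousMap.coe_sum, Finset.sum_apply, cxBump, ContinuousMap.coe_mk,
        ContinuousMap.one_apply]
      rw [← Complex.ofReal_sum, h1, Complex.ofReal_one]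
    have e : t = ∑ i, A.act (cxBump (p i)) ρ σ t := by
      rw [← sum_act', hsum, A.one_act]
    simp only [pow_zero, pow_one]
    calc ‖t‖ = ‖∑ i, A.act (cxBump (p i)) ρ σ t‖ := by rw [← e]
      _ ≤ ∑ i : Fin N, c := norm_sum_le_of_le _ fun i _ => h i _ (hcut i)
      _ = N * c := by simp
  | succ k ih =>
    intro ρ σ t c h
    have := ih ρ ρ (C.comp (C.star t) t) (c ^ 2) (fun i f hf => by
      obtain ⟨g, hg, rfl⟩ := hf.exists_sqrt
      rw [act_star_comp]
      exact pow_le_pow_left₀ (norm_nonneg _) (h i g hg) 2)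
    rw [C.cstar_identity, ← pow_mul, ← pow_mul] at this
    rwa [pow_succ']

theorem norm_le_of_fiber_lt {ρ σ : Obj} {t : Hom ρ σ} {c : ℝ} (hc0 : 0 < c)
    (h : ∀ x, fiberSeminorm A x t < c) : ‖t‖ ≤ c := by
  choose U hU hxU hb using fun x => fiber_local A (h x)
  obtain ⟨s, hs⟩ := isCompact_univ.elim_finite_subcover U hU
    (fun x _ => Set.mem_iUnion.2 ⟨x, hxU x⟩)
  let e := s.equivFin
  have hcov : ∀ x, ∃ i, x ∈ U (e.symm i).1 := by
    intro x
    obtain ⟨y, hy, hxy⟩ := Set.mem_iUnion₂.1 (hs (Set.mem_univ x))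
    exact ⟨e ⟨y, hy⟩, by simpa using hxy⟩
  have key := fun k => cover_norm_pow_le A (U := fun i => U (e.symm i).1) (fun i => hU _) hcov k ρ σ t c
    (fun i f hf => (hb _ f hf).le)
  by_contra! hlt
  have h1 : 1 < ‖t‖ / c := (one_lt_div hc0).2 hlt
  obtain ⟨k, hk⟩ := pow_unbounded_of_one_lt (s.card : ℝ) h1
  have h2 : (‖t‖ / c) ^ k ≤ (‖t‖ / c) ^ (2 ^ k) :=
    pow_le_pow_right₀ h1.le Nat.lt_two_pow_self.le
  have h3 := key k
  have h4 : (‖t‖ / c) ^ (2 ^ k) ≤ s.card := by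
    rw [div_pow, div_le_iff₀ (by positivity)]
    exact h3
  linarith

theorem fiber_smul_le (x : X) {ρ σ : Obj} (c : ℂ) (t : Hom ρ σ) :
    fiberSeminorm A x (c • t) ≤ ‖c‖ * fiberSeminorm A x t := by
  apply le_of_forall_pos_le_add
  intro ε hε
  obtain ⟨U, hU, hx, h⟩ := fiber_local A (x := x) (t := t)
    (c := fiberSeminorm A x t + ε / (‖c‖ + 1)) (by linarith [show 0 < ε / (‖c‖ + 1) by positivity])
  obtain ⟨f, hf, hfx⟩ := exists_cut hU hx
  refine (fiber_le_act A hfx _).trans ?_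
  rw [A.act_smul, norm_smul]
  calc ‖c‖ * ‖A.act (cxBump f) ρ σ t‖ ≤ ‖c‖ * (fiberSeminorm A x t + ε / (‖c‖ + 1)) := by
        gcongr; exact (h f hf).le
    _ = ‖c‖ * fiberSeminorm A x t + ‖c‖ * (ε / (‖c‖ + 1)) := by ring
    _ ≤ ‖c‖ * fiberSeminorm A x t + (‖c‖ + 1) * (ε / (‖c‖ + 1)) := by gcongr; linarith
    _ = _ := by congr 1; field_simp

theorem fiber_star_le (x : X) {ρ σ : Obj} (t : Hom ρ σ) :
    fiberSeminorm A x (C.star t) ≤ fiberSeminorm A x t := by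
  refine le_of_forall_gt_imp_ge_of_dense fun c hc => ?_
  obtain ⟨U, hU, hx, h⟩ := fiber_local A hc
  obtain ⟨f, hf, hfx⟩ := exists_cut hU hx
  refine (fiber_le_act A hfx _).trans ?_
  have e : A.act (cxBump f) σ ρ (C.star t) = C.star (A.act (cxBump f) ρ σ t) := by
    rw [A.star_act, cxBump_star]
  rw [e, C.norm_star]
  exact (h f hf).le

end

/-- The fiber functors `x_* : C → C_x` of a `C(X)`-category: the norm functions
`x ↦ ‖t_x‖` are upper semicontinuous with `‖t‖ = sup_x ‖t_x‖`, and the quotient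
seminorms are compatible with the operations of `C` (so that each fiber `C_x` is a
C*-category and each `x_*` a C*-functor). -/
theorem fiber_functors_of_CX_category [∀ ρ σ : Obj, CompleteSpace (Hom ρ σ)]
    {C : CStarCategoryStruct Hom} (A : CXAction X C) :
    -- upper semicontinuity of the norm functions
    (∀ (ρ σ : Obj) (t : Hom ρ σ),
      UpperSemicontinuous fun x : X => fiberSeminorm A x t) ∧
    -- `‖t‖ = sup_x ‖t_x‖`
    (∀ (ρ σ : Obj) (t : Hom ρ σ), ‖t‖ = ⨆ x : X, fiberSeminorm A x t) ∧
    -- the `x_*` are C*-functors into C*-categories: the quotient seminorms are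
    -- subadditive, homogeneous, submultiplicative for composition, `*`-isometric,
    -- and satisfy the C*-identity
    (∀ (x : X) (ρ σ : Obj) (t t' : Hom ρ σ),
      fiberSeminorm A x (t + t') ≤ fiberSeminorm A x t + fiberSeminorm A x t') ∧
    (∀ (x : X) (ρ σ : Obj) (c : ℂ) (t : Hom ρ σ),
      fiberSeminorm A x (c • t) = ‖c‖ * fiberSeminorm A x t) ∧
    (∀ (x : X) (ρ σ τ : Obj) (t : Hom σ τ) (u : Hom ρ σ),
      fiberSeminorm A x (C.comp t u) ≤ fiberSeminorm A x t * fiberSeminorm A x u) ∧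
    (∀ (x : X) (ρ σ : Obj) (t : Hom ρ σ),
      fiberSeminorm A x (C.star t) = fiberSeminorm A x t) ∧
    (∀ (x : X) (ρ σ : Obj) (t : Hom ρ σ),
      fiberSeminorm A x (C.comp (C.star t) t) = fiberSeminorm A x t ^ 2) := by
  refine ⟨?_, ?_, ?_, ?_, ?_, ?_, ?_⟩
  · intro ρ σ t x c hc
    obtain ⟨U, hU, hx, h⟩ := fiber_local A hc
    filter_upwards [hU.mem_nhds hx] with y hy
    obtain ⟨f, hf, hfy⟩ := exists_cut hU hy
    exact (fiber_le_act A hfy _).trans_lt (h f hf)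
  · intro ρ σ t
    have hb : BddAbove (Set.range fun x : X => fiberSeminorm A x t) :=
      ⟨‖t‖, by rintro _ ⟨x, rfl⟩; exact fiber_le_norm A x t⟩
    apply le_antisymm
    · have h0 : 0 ≤ ⨆ x : X, fiberSeminorm A x t := Real.iSup_nonneg fun x => fiber_nonneg A x t
      refine le_of_forall_gt_imp_ge_of_dense fun c hc => ?_
      exact norm_le_of_fiber_lt A (h0.trans_lt hc) fun x => (le_ciSup hb x).trans_lt hc
    · exact Real.iSup_le (fun x => fiber_le_norm A x t) (norm_nonneg _)
  · intro x ρ σ t t'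
    apply le_of_forall_pos_le_add
    intro ε hε
    obtain ⟨U, hU, hxU, h1⟩ := fiber_local A (x := x) (t := t)
      (c := fiberSeminorm A x t + ε / 2) (by linarith)
    obtain ⟨V, hV, hxV, h2⟩ := fiber_local A (x := x) (t := t')
      (c := fiberSeminorm A x t' + ε / 2) (by linarith)
    obtain ⟨f, hf, hfx⟩ := exists_cut (hU.inter hV) (Set.mem_inter hxU hxV)
    refine (fiber_le_act A hfx _).trans ?_
    rw [A.act_add]
    have := h1 f (hf.mono Set.inter_subset_left)
    have := h2 f (hf.mono Set.inter_subset_right)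
    refine (norm_add_le _ _).trans ?_
    linarith
  · intro x ρ σ c t
    apply le_antisymm (fiber_smul_le A x c t)
    by_cases hc : c = 0
    · subst hc
      simpa using fiber_nonneg A x _
    · have h := fiber_smul_le A x c⁻¹ (c • t)
      rw [inv_smul_smul₀ hc, norm_inv] at h
      have hc' : 0 < ‖c‖ := norm_pos_iff.2 hc
      rwa [inv_mul_eq_div, le_div_iff₀ hc', mul_comm] at h
  · intro x ρ σ τ t u
    have lim : Filter.Tendsto (fun ε : ℝ => (fiberSeminorm A x t + ε) * (fiberSeminorm A x u + ε))
        (nhdsWithin 0 (Set.Ioi 0)) (nhds (fiberSeminorm A x t * fiberSeminorm A x u)) := by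
      have : Continuous fun ε : ℝ => (fiberSeminorm A x t + ε) * (fiberSeminorm A x u + ε) := by
        fun_prop
      have h := this.tendsto 0
      simp only [add_zero] at h
      exact h.mono_left nhdsWithin_le_nhds
    refine ge_of_tendsto lim ?_
    filter_upwards [self_mem_nhdsWithin] with ε hε
    have hε' : 0 < ε := hε
    obtain ⟨U, hU, hxU, h1⟩ := fiber_local A (x := x) (t := t)
      (c := fiberSeminorm A x t + ε) (by linarith)
    obtain ⟨V, hV, hxV, h2⟩ := fiber_local A (x := x) (t := u)
      (c := fiberSeminorm A x u + ε) (by linarith)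
    obtain ⟨f, hf, hfx⟩ := exists_cut (hU.inter hV) (Set.mem_inter hxU hxV)
    refine (fiber_le_act A (f := f * f) (by simp [hfx]) _).trans ?_
    rw [cxBump_mul, A.mul_act, A.right_mult, A.left_mult]
    refine (C.norm_comp_le _ _).trans ?_
    exact mul_le_mul (h1 f (hf.mono Set.inter_subset_left)).le
      (h2 f (hf.mono Set.inter_subset_right)).le (norm_nonneg _)
      (add_nonneg (fiber_nonneg A x t) hε'.le)
  · intro x ρ σ t
    apply le_antisymm (fiber_star_le A x t)
    have h := fiber_star_le A x (C.star t)
    rwa [C.star_star] at h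
  · intro x ρ σ t
    apply le_antisymm
    · have lim : Filter.Tendsto (fun ε : ℝ => (fiberSeminorm A x t + ε) ^ 2)
          (nhdsWithin 0 (Set.Ioi 0)) (nhds (fiberSeminorm A x t ^ 2)) := by
        have : Continuous fun ε : ℝ => (fiberSeminorm A x t + ε) ^ 2 := by
          fun_prop
        have h := this.tendsto 0
        simp only [add_zero] at h
        exact h.mono_left nhdsWithin_le_nhds
      refine ge_of_tendsto lim ?_
      filter_upwards [self_mem_nhdsWithin] with ε hε
      have hε' : 0 < ε := hε
      obtain ⟨U, hU, hxU, h1⟩ := fiber_local A (x := x) (t := t)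
        (c := fiberSeminorm A x t + ε) (by linarith)
      obtain ⟨f, hf, hfx⟩ := exists_cut hU hxU
      refine (fiber_le_act A (f := f * f) (by simp [hfx]) _).trans ?_
      rw [act_star_comp]
      exact pow_le_pow_left₀ (norm_nonneg _) (h1 f hf).le 2
    · refine le_of_forall_gt_imp_ge_of_dense fun c hc => ?_
      obtain ⟨U, hU, hxU, h1⟩ := fiber_local A hc
      obtain ⟨f, hf, hfx⟩ := exists_cut hU hxU
      have h2 := h1 (f * f) hf.sq
      rw [act_star_comp] at h2
      exact (pow_le_pow_left₀ (fiber_nonneg A x t) (fiber_le_act A hfx t) 2).trans h2.le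
end

section
/- Let C be a strict tensor C*-category with identity object ι. Then C is a strict tensor [ι,ι]-category: the map sending f ∈ [ι,ι] to the pair of families f^l_{ρ,σ}(t) := f × t, f^r_{ρ,σ}(t) := t × f is a unital homomorphism of [ι,ι] into Z(C) (in particular f^l = f^r), and the tensor product of C is equivariant with respect to the resulting [ι,ι]-action on arrow spaces. -/
/-!
STATEMENT 10: Let `C` be a strict tensor C*-category with identity object `ι`. Then
`C` is a strict tensor `[ι,ι]`-category: the map sending `f ∈ [ι,ι]` to the pair of
families `f^l_{ρ,σ}(t) := f × t`, `f^r_{ρ,σ}(t) := t × f` is a unital homomorphism of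
`[ι,ι]` into `Z(C)` (in particular `f^l = f^r`), and the tensor product of `C` is
equivariant with respect to the resulting `[ι,ι]`-action on arrow spaces.

A strict tensor C*-category is modelled with objects a monoid (`ρ ⊗ σ = ρ * σ`,
`ι = 1`); since the equalities `1 * ρ = ρ = ρ * 1` of objects are propositional, the
left and right `[ι,ι]`-actions `f × t` and `t × f` on `(ρ,σ)` are obtained by `cast`.
-/

universe u v u' v'

variable {Obj : Type u} [Monoid Obj] {Hom : Obj → Obj → Type v}
  [∀ ρ σ, NormedAddCommGroup (Hom ρ σ)] [∀ ρ σ, NormedSpace ℂ (Hom ρ σ)]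

/-- A strict tensor structure on a C*-category: an associative bilinear C*-bifunctor
`×` with unit the identity object `1` and commuting with `*`. -/
structure StrictTensorStruct (C : CStarCategoryStruct Hom) : Type max u v where
  tens : ∀ {ρ σ ρ' σ' : Obj}, Hom ρ σ → Hom ρ' σ' → Hom (ρ * ρ') (σ * σ')
  tens_id : ∀ ρ ρ' : Obj, tens (C.id ρ) (C.id ρ') = C.id (ρ * ρ')
  tens_comp : ∀ {ρ σ τ ρ' σ' τ' : Obj} (t : Hom σ τ) (u : Hom ρ σ)
    (t' : Hom σ' τ') (u' : Hom ρ' σ'),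
    tens (C.comp t u) (C.comp t' u') = C.comp (tens t t') (tens u u')
  tens_add_left : ∀ {ρ σ ρ' σ' : Obj} (t t' : Hom ρ σ) (u : Hom ρ' σ'),
    tens (t + t') u = tens t u + tens t' u
  tens_add_right : ∀ {ρ σ ρ' σ' : Obj} (t : Hom ρ σ) (u u' : Hom ρ' σ'),
    tens t (u + u') = tens t u + tens t u'
  tens_smul_left : ∀ {ρ σ ρ' σ' : Obj} (c : ℂ) (t : Hom ρ σ) (u : Hom ρ' σ'),
    tens (c • t) u = c • tens t u
  tens_smul_right : ∀ {ρ σ ρ' σ' : Obj} (c : ℂ) (t : Hom ρ σ) (u : Hom ρ' σ'),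
    tens t (c • u) = c • tens t u
  tens_star : ∀ {ρ σ ρ' σ' : Obj} (t : Hom ρ σ) (u : Hom ρ' σ'),
    C.star (tens t u) = tens (C.star t) (C.star u)
  tens_assoc : ∀ {ρ σ ρ' σ' ρ'' σ'' : Obj} (t : Hom ρ σ) (u : Hom ρ' σ')
    (v : Hom ρ'' σ''), HEq (tens (tens t u) v) (tens t (tens u v))
  one_tens : ∀ {ρ σ : Obj} (t : Hom ρ σ), HEq (tens (C.id 1) t) t
  tens_one : ∀ {ρ σ : Obj} (t : Hom ρ σ), HEq (tens t (C.id 1)) t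
  norm_tens_le : ∀ {ρ σ ρ' σ' : Obj} (t : Hom ρ σ) (u : Hom ρ' σ'),
    ‖tens t u‖ ≤ ‖t‖ * ‖u‖

/-- The left action `f^l_{ρ,σ}(t) = f × t` of `(ι,ι)` on `(ρ,σ)`. -/
def StrictTensorStruct.lact {C : CStarCategoryStruct Hom} (T : StrictTensorStruct C)
    {ρ σ : Obj} (f : Hom 1 1) (t : Hom ρ σ) : Hom ρ σ :=
  cast (by rw [one_mul, one_mul]) (T.tens f t)

/-- The right action `f^r_{ρ,σ}(t) = t × f` of `(ι,ι)` on `(ρ,σ)`. -/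
def StrictTensorStruct.ract {C : CStarCategoryStruct Hom} (T : StrictTensorStruct C)
    {ρ σ : Obj} (f : Hom 1 1) (t : Hom ρ σ) : Hom ρ σ :=
  cast (by rw [mul_one, mul_one]) (T.tens t f)

/-- `[ι,ι] := { f ∈ (ι,ι) : 1_ρ × f = f × 1_ρ for every object ρ }`. -/
def StrictTensorStruct.centralScalars {C : CStarCategoryStruct Hom}
    (T : StrictTensorStruct C) : Set (Hom 1 1) :=
  {f : Hom 1 1 | ∀ ρ : Obj, HEq (T.tens (C.id ρ) f) (T.tens f (C.id ρ))}

section Helpers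

theorem aux_comp_heq (C : CStarCategoryStruct Hom) {ρ σ τ ρ' σ' τ' : Obj} (h1 : ρ = ρ')
    (h2 : σ = σ') (h3 : τ = τ') {t : Hom σ τ} {t' : Hom σ' τ'} {u : Hom ρ σ} {u' : Hom ρ' σ'}
    (ht : HEq t t') (hu : HEq u u') : HEq (C.comp t u) (C.comp t' u') := by
  subst h1 h2 h3; cases ht; cases hu; rfl

theorem aux_star_heq (C : CStarCategoryStruct Hom) {ρ σ ρ' σ' : Obj} (h1 : ρ = ρ')
    (h2 : σ = σ') {t : Hom ρ σ} {t' : Hom ρ' σ'}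
    (ht : HEq t t') : HEq (C.star t) (C.star t') := by
  subst h1 h2; cases ht; rfl

theorem aux_tens_heq {C : CStarCategoryStruct Hom} (T : StrictTensorStruct C)
    {ρ σ ρ' σ' α β α' β' : Obj} (h1 : ρ = ρ') (h2 : σ = σ') (h3 : α = α') (h4 : β = β')
    {t : Hom ρ σ} {t' : Hom ρ' σ'} {u : Hom α β} {u' : Hom α' β'}
    (ht : HEq t t') (hu : HEq u u') : HEq (T.tens t u) (T.tens t' u') := by
  subst h1 h2 h3 h4; cases ht; cases hu; rfl

theorem aux_add_heq {ρ σ ρ' σ' : Obj} (h1 : ρ = ρ')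
    (h2 : σ = σ') {t u : Hom ρ σ} {t' u' : Hom ρ' σ'}
    (ht : HEq t t') (hu : HEq u u') : HEq (t + u) (t' + u') := by
  subst h1 h2; cases ht; cases hu; rfl

theorem aux_smul_heq {ρ σ ρ' σ' : Obj} (h1 : ρ = ρ')
    (h2 : σ = σ') (c : ℂ) {t : Hom ρ σ} {t' : Hom ρ' σ'}
    (ht : HEq t t') : HEq (c • t) (c • t') := by
  subst h1 h2; cases ht; rfl

theorem aux_norm_heq {ρ σ ρ' σ' : Obj} (h1 : ρ = ρ')
    (h2 : σ = σ') {t : Hom ρ σ} {t' : Hom ρ' σ'}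
    (ht : HEq t t') : ‖t‖ = ‖t'‖ := by
  subst h1 h2; cases ht; rfl

variable {C : CStarCategoryStruct Hom} (T : StrictTensorStruct C)

theorem aux_lact {ρ σ : Obj} (f : Hom 1 1) (t : Hom ρ σ) : HEq (T.lact f t) (T.tens f t) :=
  cast_heq _ _

theorem aux_ract {ρ σ : Obj} (f : Hom 1 1) (t : Hom ρ σ) : HEq (T.ract f t) (T.tens t f) :=
  cast_heq _ _

theorem aux_lr {f : Hom 1 1} (hf : f ∈ T.centralScalars) {ρ σ : Obj} (t : Hom ρ σ) :
    T.lact f t = T.ract f t := by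
  have e1 : T.tens f t = C.comp (T.tens f (C.id σ)) (T.tens (C.id 1) t) := by
    rw [← T.tens_comp, C.comp_id, C.id_comp]
  have e2 : T.tens t f = C.comp (T.tens (C.id σ) f) (T.tens t (C.id 1)) := by
    rw [← T.tens_comp, C.comp_id, C.id_comp]
  apply eq_of_heq
  refine (aux_lact T f t).trans (HEq.trans ?_ (aux_ract T f t).symm)
  rw [e1, e2]
  exact aux_comp_heq C (by simp) (by simp) (by simp) (hf σ).symm
    ((T.one_tens t).trans (T.tens_one t).symm)

theorem aux_mul1 (f : Hom 1 1) {ρ σ τ : Obj} (t : Hom σ τ) (u : Hom ρ σ) :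
    T.lact f (C.comp t u) = C.comp (T.lact f t) u := by
  have e1 : T.tens f (C.comp t u) = C.comp (T.tens f t) (T.tens (C.id 1) u) := by
    rw [← T.tens_comp, C.comp_id]
  apply eq_of_heq
  refine (aux_lact T f _).trans ?_
  rw [e1]
  exact aux_comp_heq C (by simp) (by simp) (by simp) (aux_lact T f t).symm (T.one_tens u)

theorem aux_mul2 (f : Hom 1 1) {ρ σ τ : Obj} (t : Hom σ τ) (u : Hom ρ σ) :
    T.lact f (C.comp t u) = C.comp t (T.lact f u) := by
  have e1 : T.tens f (C.comp t u) = C.comp (T.tens (C.id 1) t) (T.tens f u) := by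
    rw [← T.tens_comp, C.id_comp]
  apply eq_of_heq
  refine (aux_lact T f _).trans ?_
  rw [e1]
  exact aux_comp_heq C (by simp) (by simp) (by simp) (T.one_tens t) (aux_lact T f u).symm

end Helpers

/-- Every strict tensor C*-category is a strict tensor `[ι,ι]`-category: for
`f, g ∈ [ι,ι]` the pair `(f^l, f^r)` is a multiplier with `f^l = f^r`, i.e. an
element of `Z(C)`, the assignment `f ↦ (f^l, f^r)` is a unital *-homomorphism, and
the tensor product is `[ι,ι]`-equivariant. -/
theorem strict_tensor_cstar_category_is_tensor_scalar_category
    [∀ ρ σ : Obj, CompleteSpace (Hom ρ σ)]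
    (C : CStarCategoryStruct Hom) (T : StrictTensorStruct C) :
    ∀ f ∈ T.centralScalars, ∀ g ∈ T.centralScalars,
      -- `f^l = f^r` : the image lies in `Z(C)`
      (∀ (ρ σ : Obj) (t : Hom ρ σ), T.lact f t = T.ract f t) ∧
      -- `(f^l, f^r)` is a multiplier of `C`
      (∀ (ρ σ τ : Obj) (t : Hom σ τ) (u : Hom ρ σ),
        T.lact f (C.comp t u) = C.comp (T.lact f t) u ∧
        T.lact f (C.comp t u) = C.comp t (T.lact f u)) ∧
      (∀ (ρ σ : Obj) (t t' : Hom ρ σ), T.lact f (t + t') = T.lact f t + T.lact f t') ∧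
      (∀ (ρ σ : Obj) (c : ℂ) (t : Hom ρ σ), T.lact f (c • t) = c • T.lact f t) ∧
      (∀ (ρ σ : Obj) (t : Hom ρ σ), ‖T.lact f t‖ ≤ ‖f‖ * ‖t‖) ∧
      -- `f ↦ (f^l, f^r)` is a unital *-homomorphism `[ι,ι] → Z(C)`
      (∀ (ρ σ : Obj) (t : Hom ρ σ), T.lact (C.id 1) t = t) ∧
      (∀ (ρ σ : Obj) (t : Hom ρ σ), T.lact (f + g) t = T.lact f t + T.lact g t) ∧
      (∀ (ρ σ : Obj) (c : ℂ) (t : Hom ρ σ), T.lact (c • f) t = c • T.lact f t) ∧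
      (∀ (ρ σ : Obj) (t : Hom ρ σ), T.lact (C.comp f g) t = T.lact f (T.lact g t)) ∧
      (∀ (ρ σ : Obj) (t : Hom ρ σ), C.star (T.lact f t) = T.lact (C.star f) (C.star t)) ∧
      -- the tensor product is `[ι,ι]`-equivariant
      (∀ (ρ σ ρ' σ' : Obj) (t : Hom ρ σ) (u : Hom ρ' σ'),
        T.tens (T.lact f t) u = T.lact f (T.tens t u) ∧
        T.tens t (T.lact f u) = T.lact f (T.tens t u)) := by
  intro f hf g hg
  refine ⟨fun ρ σ t => aux_lr T hf t, fun ρ σ τ t u => ⟨aux_mul1 T f t u, aux_mul2 T f t u⟩,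
    fun ρ σ t t' => ?_, fun ρ σ c t => ?_, fun ρ σ t => ?_, fun ρ σ t => ?_, fun ρ σ t => ?_,
    fun ρ σ c t => ?_, fun ρ σ t => ?_, fun ρ σ t => ?_, fun ρ σ ρ' σ' t u => ⟨?_, ?_⟩⟩
  · apply eq_of_heq
    refine (aux_lact T f _).trans ?_
    rw [T.tens_add_right]
    exact aux_add_heq (by simp) (by simp) (aux_lact T f t).symm (aux_lact T f t').symm
  · apply eq_of_heq
    refine (aux_lact T f _).trans ?_
    rw [T.tens_smul_right]
    exact aux_smul_heq (by simp) (by simp) c (aux_lact T f t).symm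
  · rw [aux_norm_heq (one_mul ρ).symm (one_mul σ).symm (aux_lact T f t)]
    exact T.norm_tens_le f t
  · exact eq_of_heq ((aux_lact T _ t).trans (T.one_tens t))
  · apply eq_of_heq
    refine (aux_lact T _ _).trans ?_
    rw [T.tens_add_left]
    exact aux_add_heq (by simp) (by simp) (aux_lact T f t).symm (aux_lact T g t).symm
  · apply eq_of_heq
    refine (aux_lact T _ _).trans ?_
    rw [T.tens_smul_left]
    exact aux_smul_heq (by simp) (by simp) c (aux_lact T f t).symm
  · have e1 : T.tens (C.comp f g) t = C.comp (T.tens f (C.id σ)) (T.tens g t) := by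
      rw [← T.tens_comp, C.id_comp]
    have e2 : T.lact f (T.lact g t) = C.comp (T.lact f (C.id σ)) (T.lact g t) := by
      rw [← aux_mul1, C.id_comp]
    apply eq_of_heq
    refine (aux_lact T _ _).trans ?_
    rw [e1, e2]
    exact aux_comp_heq C (by simp) (by simp) (by simp) (aux_lact T f _).symm
      (aux_lact T g t).symm
  · apply eq_of_heq
    refine (aux_star_heq C (by simp) (by simp) (aux_lact T f t)).trans ?_
    rw [T.tens_star]
    exact (aux_lact T _ _).symm
  · apply eq_of_heq
    refine (aux_tens_heq T (by simp) (by simp) rfl rfl (aux_lact T f t) HEq.rfl).trans ?_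
    exact (T.tens_assoc f t u).trans (aux_lact T f _).symm
  · rw [aux_lr T hf, aux_lr T hf]
    apply eq_of_heq
    refine (aux_tens_heq T rfl rfl (by simp) (by simp) HEq.rfl (aux_ract T f u)).trans ?_
    exact (T.tens_assoc t u f).symm.trans (aux_ract T f _).symm
end

section
/- Let ρ be a unital endomorphism of a unital C*-algebra A with weak permutation symmetry ε. Then the C*-algebra O_[ρ] generated by the spaces [ρ^r, ρ^s] := { t ∈ (ρ^r, ρ^s) : ε(s,1) t = ρ(t) ε(r,1) } is ρ-stable and is a Z^ρ-algebra, where Z^ρ := { f ∈ Z(A) : ρ(fa) = fρ(a) for all a ∈ A }. -/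
/-!
STATEMENT 14: Let `ρ` be a unital endomorphism of a unital C*-algebra `A` with weak
permutation symmetry `ε`. Then the C*-algebra `O_[ρ]` generated by the spaces
`[ρ^r, ρ^s] := { t ∈ (ρ^r, ρ^s) : ε(s,1) t = ρ(t) ε(r,1) }` is `ρ`-stable and is a
`Z^ρ`-algebra, where `Z^ρ := { f ∈ Z(A) : ρ(fa) = fρ(a) for all a ∈ A }`.
-/

open scoped BigOperators

/-- `p ∈ P_∞`: a permutation of `ℕ` with finite support. -/
def FinitelySupportedPerm (p : Equiv.Perm ℕ) : Prop :=
  {n : ℕ | p n ≠ n}.Finite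

/-- The shift `S` on permutations of `ℕ`: `(Sp)(0) = 0`, `(Sp)(n+1) = p(n) + 1`. -/
def shiftPerm (p : Equiv.Perm ℕ) : Equiv.Perm ℕ where
  toFun n := Nat.casesOn n 0 fun m => p m + 1
  invFun n := Nat.casesOn n 0 fun m => p.symm m + 1
  left_inv n := by
    cases n with
    | zero => rfl
    | succ m => show p.symm (p m) + 1 = m + 1; rw [Equiv.symm_apply_apply]
  right_inv n := by
    cases n with
    | zero => rfl
    | succ m => show p (p.symm m) + 1 = m + 1; rw [Equiv.apply_symm_apply]

/-- The block permutation `(r,s) ∈ P_{r+s} ⊂ P_∞` exchanging the first `r` terms with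
the following `s` terms. -/
def blockPerm (r s : ℕ) : Equiv.Perm ℕ where
  toFun n := if n < r then n + s else if n < r + s then n - r else n
  invFun n := if n < s then n + r else if n < r + s then n - s else n
  left_inv n := by dsimp only; split_ifs <;> omega
  right_inv n := by dsimp only; split_ifs <;> omega

/-- The intertwiner space `(ρ^r, ρ^s) = { t ∈ A : ρ^s(a) t = t ρ^r(a) }` of a unital
endomorphism `ρ` of a unital C*-algebra `A`. -/
def intertwinerSpace {A : Type*} [CStarAlgebra A] (ρ : A →⋆ₐ[ℂ] A) (r s : ℕ) : Set A :=
  {t : A | ∀ a : A, (⇑ρ)^[s] a * t = t * (⇑ρ)^[r] a}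

/-- `ε` is a weak permutation symmetry for `ρ`: a unitary representation of the group
`P_∞` of finitely supported permutations of `ℕ` in `A` with `ε(Sp) = ρ(ε(p))` and
`ε(1,1) ∈ (ρ², ρ²)`. -/
structure IsWeakPermSym {A : Type*} [CStarAlgebra A] (ρ : A →⋆ₐ[ℂ] A)
    (ε : Equiv.Perm ℕ → A) : Prop where
  map_one : ε 1 = 1
  map_mul : ∀ p q : Equiv.Perm ℕ, FinitelySupportedPerm p → FinitelySupportedPerm q →
    ε (p * q) = ε p * ε q
  unitary : ∀ p : Equiv.Perm ℕ, FinitelySupportedPerm p →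
    star (ε p) * ε p = 1 ∧ ε p * star (ε p) = 1
  shift : ∀ p : Equiv.Perm ℕ, FinitelySupportedPerm p → ε (shiftPerm p) = ρ (ε p)
  flip_mem : ε (blockPerm 1 1) ∈ intertwinerSpace ρ 2 2

/-- The space `[ρ^r, ρ^s]` of intertwiners compatible with the weak permutation
symmetry `ε`. -/
def symIntertwinerSpace {A : Type*} [CStarAlgebra A] (ρ : A →⋆ₐ[ℂ] A)
    (ε : Equiv.Perm ℕ → A) (r s : ℕ) : Set A :=
  {t ∈ intertwinerSpace ρ r s | ε (blockPerm s 1) * t = ρ t * ε (blockPerm r 1)}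

/-- `O_[ρ]`: the C*-subalgebra of `A` generated by the spaces `[ρ^r, ρ^s]`. -/
def symDRAlgebra {A : Type*} [CStarAlgebra A] (ρ : A →⋆ₐ[ℂ] A)
    (ε : Equiv.Perm ℕ → A) : StarSubalgebra ℂ A :=
  (StarAlgebra.adjoin ℂ (⋃ r : ℕ, ⋃ s : ℕ, symIntertwinerSpace ρ ε r s)).topologicalClosure

/-- `Z^ρ := { f ∈ Z(A) : ρ(fa) = f ρ(a) for all a }`. -/
def endoCenter {A : Type*} [CStarAlgebra A] (ρ : A →⋆ₐ[ℂ] A) : Set A :=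
  {f : A | f ∈ Set.center A ∧ ∀ a : A, ρ (f * a) = f * ρ a}

lemma fs_swap (i j : ℕ) : FinitelySupportedPerm (Equiv.swap i j) := by
  refine (Set.toFinite ({i, j} : Set ℕ)).subset ?_
  intro n hn
  by_contra h
  simp only [Set.mem_insert_iff, Set.mem_singleton_iff, not_or] at h
  exact hn (Equiv.swap_apply_of_ne_of_ne h.1 h.2)

lemma fs_block (r s : ℕ) : FinitelySupportedPerm (blockPerm r s) := by
  refine (Set.finite_lt_nat (r + s)).subset ?_
  intro n hn
  simp only [Set.mem_ofPred_eq] at hn ⊢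
  by_contra h
  apply hn
  show (if n < r then n + s else if n < r + s then n - r else n) = n
  split_ifs <;> omega

lemma blockPerm_apply (r s n : ℕ) :
    blockPerm r s n = if n < r then n + s else if n < r + s then n - r else n := rfl

lemma shiftPerm_zero (p : Equiv.Perm ℕ) : shiftPerm p 0 = 0 := rfl

lemma shiftPerm_succ (p : Equiv.Perm ℕ) (n : ℕ) : shiftPerm p (n + 1) = p n + 1 := rfl

lemma shift_swap (i : ℕ) : shiftPerm (Equiv.swap i (i + 1)) = Equiv.swap (i + 1) (i + 2) := by
  ext n
  cases n with
  | zero => rw [shiftPerm_zero, Equiv.swap_apply_def]; split_ifs <;> omega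
  | succ m =>
    rw [shiftPerm_succ, Equiv.swap_apply_def, Equiv.swap_apply_def]; split_ifs <;> omega

lemma block_one_one : blockPerm 1 1 = Equiv.swap 0 1 := by
  ext n
  rw [blockPerm_apply, Equiv.swap_apply_def]; split_ifs <;> omega

lemma block_zero_one : blockPerm 0 1 = 1 := by
  ext n
  rw [blockPerm_apply, Equiv.Perm.one_apply]; split_ifs <;> omega

lemma block_succ (s : ℕ) : blockPerm (s + 1) 1 = blockPerm s 1 * Equiv.swap s (s + 1) := by
  ext n
  rw [Equiv.Perm.mul_apply, blockPerm_apply, blockPerm_apply, Equiv.swap_apply_def]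
  split_ifs <;> omega

lemma block_comm (i : ℕ) : blockPerm (i + 2) 1 * Equiv.swap i (i + 1)
    = Equiv.swap (i + 1) (i + 2) * blockPerm (i + 2) 1 := by
  ext n
  rw [Equiv.Perm.mul_apply, Equiv.Perm.mul_apply, blockPerm_apply, blockPerm_apply,
    Equiv.swap_apply_def, Equiv.swap_apply_def]
  split_ifs <;> omega

section
variable {A : Type*} [CStarAlgebra A] (ρ : A →⋆ₐ[ℂ] A) (ε : Equiv.Perm ℕ → A)

lemma eps_swap (hε : IsWeakPermSym ρ ε) (i : ℕ) :
    ε (Equiv.swap i (i + 1)) = (⇑ρ)^[i] (ε (blockPerm 1 1)) := by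
  induction i with
  | zero => rw [block_one_one]; rfl
  | succ i ih =>
    rw [← shift_swap, hε.shift _ (fs_swap _ _), ih, Function.iterate_succ_apply']

lemma eps_swap_mem (hε : IsWeakPermSym ρ ε) (i : ℕ) :
    ε (Equiv.swap i (i + 1)) ∈ symIntertwinerSpace ρ ε (i + 2) (i + 2) := by
  refine ⟨fun a => ?_, ?_⟩
  · rw [eps_swap ρ ε hε, Function.iterate_add_apply, ← iterate_map_mul, ← iterate_map_mul,
      hε.flip_mem a]
  · rw [← hε.shift _ (fs_swap _ _), shift_swap, ← hε.map_mul _ _ (fs_block _ _) (fs_swap _ _),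
      ← hε.map_mul _ _ (fs_swap _ _) (fs_block _ _), block_comm]

lemma sym_mem (r s : ℕ) (t : A) (ht : t ∈ symIntertwinerSpace ρ ε r s) :
    t ∈ symDRAlgebra ρ ε :=
  StarSubalgebra.le_topologicalClosure _ (StarAlgebra.subset_adjoin ℂ _
    (Set.mem_iUnion.2 ⟨r, Set.mem_iUnion.2 ⟨s, ht⟩⟩))

lemma eps_block_mem (hε : IsWeakPermSym ρ ε) (s : ℕ) :
    ε (blockPerm s 1) ∈ symDRAlgebra ρ ε := by
  induction s with
  | zero => rw [block_zero_one, hε.map_one]; exact one_mem _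
  | succ s ih =>
    rw [block_succ, hε.map_mul _ _ (fs_block _ _) (fs_swap _ _)]
    exact mul_mem ih (sym_mem ρ ε _ _ _ (eps_swap_mem ρ ε hε s))

lemma rho_gen_mem (hε : IsWeakPermSym ρ ε) (r s : ℕ) (t : A)
    (ht : t ∈ symIntertwinerSpace ρ ε r s) : ρ t ∈ symDRAlgebra ρ ε := by
  have h : ρ t = ε (blockPerm s 1) * t * star (ε (blockPerm r 1)) := by
    rw [ht.2, mul_assoc, (hε.unitary _ (fs_block r 1)).2, mul_one]
  rw [h]
  exact mul_mem (mul_mem (eps_block_mem ρ ε hε s) (sym_mem ρ ε _ _ _ ht))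
    (star_mem (eps_block_mem ρ ε hε r))

lemma rho_stable (hε : IsWeakPermSym ρ ε) :
    symDRAlgebra ρ ε ≤ (symDRAlgebra ρ ε).comap ρ := by
  refine StarSubalgebra.topologicalClosure_minimal (StarAlgebra.adjoin_le ?_) ?_
  · intro t ht
    obtain ⟨r, hr⟩ := Set.mem_iUnion.1 ht
    obtain ⟨s, hs⟩ := Set.mem_iUnion.1 hr
    exact rho_gen_mem ρ ε hε r s t hs
  · have hc : Continuous (ρ : A → A) :=
      AddMonoidHomClass.continuous_of_bound ρ 1 (fun a => by
        rw [one_mul]; exact NonUnitalStarAlgHom.norm_apply_le ρ a)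
    exact (StarSubalgebra.isClosed_topologicalClosure _).preimage hc

end

/-- `O_[ρ]` is `ρ`-stable and is a `Z^ρ`-algebra (i.e. `Z^ρ` acts on `O_[ρ]` by central
multipliers; the action is unital, hence nondegenerate, since `O_[ρ]` is unital). -/
theorem symDRAlgebra_rho_stable_and_endoCenter_algebra
    {A : Type*} [CStarAlgebra A] (ρ : A →⋆ₐ[ℂ] A) (ε : Equiv.Perm ℕ → A)
    (hε : IsWeakPermSym ρ ε) :
    (∀ b ∈ symDRAlgebra ρ ε, ρ b ∈ symDRAlgebra ρ ε) ∧
    (∀ f ∈ endoCenter ρ, ∀ b ∈ symDRAlgebra ρ ε,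
      f * b ∈ symDRAlgebra ρ ε ∧ f * b = b * f) := by
  exact ⟨fun b hb => rho_stable ρ ε hε hb, fun f hf b hb => by
    have hf0 : f ∈ symIntertwinerSpace ρ ε 0 0 := by
      refine ⟨fun a => ((Set.mem_center_iff.1 hf.1).comm a).symm, ?_⟩
      have h := hf.2 1
      rw [mul_one, map_one, mul_one] at h
      rw [block_zero_one, hε.map_one, h, one_mul, mul_one]
    exact ⟨mul_mem (sym_mem ρ ε 0 0 f hf0) hb, (Set.mem_center_iff.1 hf.1).comm b⟩⟩
end
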